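/- Let T be a tournament with strong components D_1, …, D_k, and let X be the geodetic or the P3* convexity. Then the interval and hull numbers of T are additive over strong components: in_X(T) = Σ_{i=1}^k in_X(D_i) and hn_X(T) = Σ_{i=1}^k hn_X(D_i). -/

import Mathlib

/-! Basic machinery for convexity on oriented graphs. -/

/-- A directed walk along the arc relation `A` from `u` to `v`,
recorded as the (nonempty) list of its vertices. Its length is `l.length - 1`. -/
def DiWalk {V : Type*} (A : V → V → Prop) (u v : V) (l : List V) : Prop :=
  l.head? = some u ∧ l.getLast? = some v ∧ l.Chain' A

/-- A shortest directed walk (geodesic) from `u` to `v`: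
a directed walk of minimum length among all directed `(u,v)`-walks. -/
def IsGeodesic {V : Type*} (A : V → V → Prop) (u v : V) (l : List V) : Prop :=
  DiWalk A u v l ∧ ∀ l', DiWalk A u v l' → l.length ≤ l'.length

/-- Geodetic interval: `u`, `v`, and all vertices lying on a shortest directed
`(u,v)`-path or on a shortest directed `(v,u)`-path. -/
def geoInterval {V : Type*} (A : V → V → Prop) (u v : V) : Set V :=
  {u, v} ∪ {w | (∃ l, IsGeodesic A u v l ∧ w ∈ l) ∨ (∃ l, IsGeodesic A v u l ∧ w ∈ l)}

/-- P3 interval: `u`, `v`, and all vertices lying on a directed `(u,v)`- or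
`(v,u)`-path of length two. -/
def p3Interval {V : Type*} (A : V → V → Prop) (u v : V) : Set V :=
  {u, v} ∪ {w | (A u w ∧ A w v) ∨ (A v w ∧ A w u)}

/-- P3* interval: `u`, `v`, and all vertices lying on a shortest directed `(u,v)`- or
`(v,u)`-path of length two (i.e. the corresponding endpoints are not adjacent). -/
def p3sInterval {V : Type*} (A : V → V → Prop) (u v : V) : Set V :=
  {u, v} ∪ {w | (A u w ∧ A w v ∧ ¬ A u v) ∨ (A v w ∧ A w u ∧ ¬ A v u)}

/-- A set is convex for the interval function `I` if it is closed under `I`. -/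
def IsConvexSet {V : Type*} (I : V → V → Set V) (C : Set V) : Prop :=
  ∀ u ∈ C, ∀ v ∈ C, I u v ⊆ C

/-- The convex hull of `S`: the smallest convex set containing `S`. -/
def convexHullD {V : Type*} (I : V → V → Set V) (S : Set V) : Set V :=
  ⋂₀ {C | IsConvexSet I C ∧ S ⊆ C}

/-- `S` is an interval set if applying `I` to pairs of `S` covers all vertices. -/
def IsIntervalSet {V : Type*} (I : V → V → Set V) (S : Set V) : Prop :=
  (⋃ u ∈ S, ⋃ v ∈ S, I u v) = Set.univ

/-- `S` is a hull set if its convex hull is the whole vertex set. -/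
def IsHullSet {V : Type*} (I : V → V → Set V) (S : Set V) : Prop :=
  convexHullD I S = Set.univ

/-- The interval number: minimum cardinality of an interval set. -/
noncomputable def intervalNumber {V : Type*} (I : V → V → Set V) : ℕ :=
  sInf {k | ∃ S : Set V, IsIntervalSet I S ∧ S.ncard = k}

/-- The hull number: minimum cardinality of a hull set. -/
noncomputable def hullNumber {V : Type*} (I : V → V → Set V) : ℕ :=
  sInf {k | ∃ S : Set V, IsHullSet I S ∧ S.ncard = k}

/-- `v` is reachable from `u` by a directed walk. -/
def Reach {V : Type*} (A : V → V → Prop) (u v : V) : Prop :=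
  ∃ l, DiWalk A u v l

/-- An oriented graph: no loops and at most one arc between any two vertices. -/
def IsOriented {V : Type*} (A : V → V → Prop) : Prop :=
  ∀ u v, A u v → ¬ A v u

/-- Strong connectivity. -/
def StronglyConnected {V : Type*} (A : V → V → Prop) : Prop :=
  ∀ u v, Reach A u v

/-- Connectivity of the underlying undirected graph. -/
def ConnectedD {V : Type*} (A : V → V → Prop) : Prop :=
  ∀ u v : V, Reach (fun a b => A a b ∨ A b a) u v

/-- A strong component: an equivalence class of mutual reachability. -/
def IsStrongComponent {V : Type*} (A : V → V → Prop) (C : Set V) : Prop :=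
  ∃ v, C = {u | Reach A u v ∧ Reach A v u}

/-- A sink strong component: a strong component with no arc leaving it. -/
def IsSinkComponent {V : Type*} (A : V → V → Prop) (C : Set V) : Prop :=
  IsStrongComponent A C ∧ ∀ u ∈ C, ∀ w, w ∉ C → ¬ A u w

/-- A source strong component: a strong component with no arc entering it. -/
def IsSourceComponent {V : Type*} (A : V → V → Prop) (C : Set V) : Prop :=
  IsStrongComponent A C ∧ ∀ u ∈ C, ∀ w, w ∉ C → ¬ A w u

/-- The out-section of `u`: all vertices reachable from `u`. -/
def outSection {V : Type*} (A : V → V → Prop) (u : V) : Set V :=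
  {w | Reach A u w}

/-- The in-section of `u`: all vertices from which `u` is reachable. -/
def inSection {V : Type*} (A : V → V → Prop) (u : V) : Set V :=
  {w | Reach A w u}

/-- A tournament: an oriented graph where every two distinct vertices are adjacent. -/
def IsTournament {V : Type*} (A : V → V → Prop) : Prop :=
  (∀ u v, A u v → ¬ A v u) ∧ ∀ u v : V, u ≠ v → A u v ∨ A v u

/-- The number of arcs of the digraph given by `A`. -/
noncomputable def arcCount {V : Type*} (A : V → V → Prop) : ℕ :=
  Nat.card {p : V × V // A p.1 p.2}

/-!
Strong components are closed under taking vertices on directed walks, so an interval between two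
vertices of one component stays inside it and is the interval computed there. Vertices `u`, `v` of
distinct components are joined by an arc, say `A u v`, and `u` is not reachable from `v`; hence
`[u, v]` is the only geodesic between them, no path of length two between them counts for P3*, and
their interval is `{u, v}`. So being an interval set, or a hull set, can be tested component by
component, and the minimum cardinalities add up.
-/

section Reachability

variable {V : Type*} {A : V → V → Prop} {u v w : V}

theorem Reach.refl (u : V) : Reach A u u :=
  ⟨[u], rfl, rfl, .singleton u⟩

theorem diWalk_pair (h : A u v) : DiWalk A u v [u, v] :=
  ⟨rfl, rfl, List.isChain_pair.2 h⟩

theorem Reach.of_arc (h : A u v) : Reach A u v :=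
  ⟨[u, v], diWalk_pair h⟩

theorem Reach.trans (huv : Reach A u v) (hvw : Reach A v w) : Reach A u w := by
  obtain ⟨p, hpu, hpv, hp⟩ := huv
  obtain ⟨q, hqv, hqw, hq⟩ := hvw
  obtain ⟨p, rfl⟩ := List.getLast?_eq_some_iff.1 hpv
  obtain ⟨q, rfl⟩ := List.head?_eq_some_iff.1 hqv
  refine ⟨p ++ v :: q, ?_, ?_, List.isChain_split.2 ⟨hp, hq⟩⟩
  · simpa only [List.head?_append, List.head?_cons] using hpu
  · simpa only [List.getLast?_append_cons] using hqw

theorem DiWalk.reach_of_mem {l : List V} (h : DiWalk A u v l) (hw : w ∈ l) :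
    Reach A u w ∧ Reach A w v := by
  obtain ⟨hu, hv, hl⟩ := h
  obtain ⟨p, q, rfl⟩ := List.append_of_mem hw
  obtain ⟨hp, hq⟩ := List.isChain_split.1 hl
  refine ⟨⟨p ++ [w], ?_, by simp, hp⟩, ⟨w :: q, rfl, ?_, hq⟩⟩
  · simpa only [List.head?_append, List.head?_cons] using hu
  · simpa only [List.getLast?_append_cons] using hv

/-- Mutual reachability, the equivalence relation whose classes are the strong components. -/
def mutualReachSetoid (A : V → V → Prop) : Setoid V where
  r u v := Reach A u v ∧ Reach A v u
  iseqv :=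
    { refl := fun u => ⟨.refl u, .refl u⟩
      symm := And.symm
      trans := fun huv hvw => ⟨huv.1.trans hvw.1, hvw.2.trans huv.2⟩ }

theorem isStrongComponent_iff_mem_classes {C : Set V} :
    IsStrongComponent A C ↔ C ∈ (mutualReachSetoid A).classes :=
  Iff.rfl

theorem existsUnique_mem_of_strongComponents {ι : Type*} {D : ι → Set V}
    (hD : ∀ i, IsStrongComponent A (D i))
    (hall : ∀ C : Set V, IsStrongComponent A C → ∃ i, D i = C)
    (hinj : Function.Injective D) (v : V) : ∃! i, v ∈ D i := by
  obtain ⟨C, ⟨hC, hvC⟩, huniq⟩ := Setoid.classes_eqv_classes (r := mutualReachSetoid A) v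
  obtain ⟨i, rfl⟩ := hall C (isStrongComponent_iff_mem_classes.2 hC)
  exact ⟨i, hvC, fun j hj => hinj (huniq _ ⟨isStrongComponent_iff_mem_classes.1 (hD j), hj⟩)⟩

/-- `C` contains every vertex lying on a directed walk between two of its vertices. -/
def IsPathClosed (A : V → V → Prop) (C : Set V) : Prop :=
  ∀ ⦃u⦄, u ∈ C → ∀ ⦃v⦄, v ∈ C → ∀ ⦃w⦄, Reach A u w → Reach A w v → w ∈ C

theorem IsStrongComponent.isPathClosed {C : Set V} (hC : IsStrongComponent A C) :
    IsPathClosed A C := by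
  obtain ⟨c, rfl⟩ := hC
  exact fun u hu v hv w huw hwv => ⟨hwv.trans hv.1, hu.2.trans huw⟩

end Reachability

section Geodesics

variable {V : Type*} {A : V → V → Prop} {C : Set V}

theorem diWalk_map_val {u v : C} {l : List C} :
    DiWalk A u v (l.map Subtype.val) ↔ DiWalk (fun a b : C => A a b) u v l := by
  refine and_congr ?_ (and_congr ?_ (List.isChain_map (R := A) Subtype.val))
  · rw [List.head?_map]
    exact (Option.map_injective Subtype.val_injective).eq_iff (b := some u)
  · rw [List.getLast?_map]
    exact (Option.map_injective Subtype.val_injective).eq_iff (b := some v)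

theorem IsPathClosed.exists_map_val_eq (hC : IsPathClosed A C) {u v : C} {l : List V}
    (hl : DiWalk A u v l) : ∃ l' : List C, l'.map Subtype.val = l :=
  CanLift.prf l fun _ hw =>
    hC u.2 v.2 (hl.reach_of_mem hw).1 (hl.reach_of_mem hw).2

theorem IsPathClosed.isGeodesic_map_val (hC : IsPathClosed A C) {u v : C} {l : List C} :
    IsGeodesic A u v (l.map Subtype.val) ↔ IsGeodesic (fun a b : C => A a b) u v l := by
  refine and_congr diWalk_map_val ⟨fun hmin l' hl' => ?_, fun hmin l' hl' => ?_⟩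
  · simpa only [List.length_map] using hmin _ (diWalk_map_val.2 hl')
  · obtain ⟨l', rfl⟩ := hC.exists_map_val_eq hl'
    simpa only [List.length_map] using hmin l' (diWalk_map_val.1 hl')

/-- The vertex `w` lies on a geodesic from `u` to `v`. -/
def OnGeodesic (A : V → V → Prop) (u v w : V) : Prop :=
  ∃ l, IsGeodesic A u v l ∧ w ∈ l

theorem IsPathClosed.onGeodesic_coe_iff (hC : IsPathClosed A C) {u v w : C} :
    OnGeodesic A u v w ↔ OnGeodesic (fun a b : C => A a b) u v w := by
  constructor
  · rintro ⟨l, hl, hw⟩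
    obtain ⟨l, rfl⟩ := hC.exists_map_val_eq hl.1
    exact ⟨l, hC.isGeodesic_map_val.1 hl, (List.mem_map_of_injective Subtype.val_injective).1 hw⟩
  · rintro ⟨l, hl, hw⟩
    exact ⟨l.map Subtype.val, hC.isGeodesic_map_val.2 hl, List.mem_map_of_mem hw⟩

theorem OnGeodesic.reach {u v w : V} (h : OnGeodesic A u v w) : Reach A u w ∧ Reach A w v :=
  let ⟨_, hl, hw⟩ := h
  hl.1.reach_of_mem hw

theorem OnGeodesic.eq_or_eq_of_arc {u v w : V} (h : OnGeodesic A u v w) (huv : A u v) :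
    w = u ∨ w = v := by
  obtain ⟨l, ⟨⟨hu, hv, -⟩, hmin⟩, hw⟩ := h
  have hlen : l.length ≤ 2 := hmin _ (diWalk_pair huv)
  match l with
  | [] => simp at hw
  | [x] => simp_all
  | [x, y] => simp_all
  | _ :: _ :: _ :: _ => simp at hlen

/-- The vertex `w` is the middle of a two-arc path from `u` to `v`, and `(u, v)` is not an arc. -/
def OnP3Star (A : V → V → Prop) (u v w : V) : Prop :=
  A u w ∧ A w v ∧ ¬ A u v

theorem OnP3Star.reach {u v w : V} (h : OnP3Star A u v w) : Reach A u w ∧ Reach A w v :=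
  ⟨.of_arc h.1, .of_arc h.2.1⟩

end Geodesics

section Betweenness

variable {V : Type*} {A : V → V → Prop} {B : V → V → V → Prop}

/-- The interval function of a directed betweenness relation, where `B u v w` says that `w` lies
between `u` and `v` on the way from `u` to `v`. -/
def betweenInterval (B : V → V → V → Prop) (u v : V) : Set V :=
  {u, v} ∪ {w | B u v w ∨ B v u w}

theorem geoInterval_eq_betweenInterval (A : V → V → Prop) :
    geoInterval A = betweenInterval (OnGeodesic A) :=
  rfl

theorem p3sInterval_eq_betweenInterval (A : V → V → Prop) :
    p3sInterval A = betweenInterval (OnP3Star A) :=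
  rfl

theorem mem_betweenInterval_self (u : V) : u ∈ betweenInterval B u u :=
  .inl (.inl rfl)

theorem betweenInterval_comm (u v : V) : betweenInterval B u v = betweenInterval B v u := by
  simp only [betweenInterval, Set.pair_comm u v, or_comm]

theorem IsPathClosed.isConvexSet_betweenInterval {C : Set V} (hC : IsPathClosed A C)
    (hB : ∀ u v w, B u v w → Reach A u w ∧ Reach A w v) :
    IsConvexSet (betweenInterval B) C := by
  rintro u hu v hv w ((rfl | rfl) | hw | hw)
  · exact hu
  · exact hv
  · exact hC hu hv (hB u v w hw).1 (hB u v w hw).2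
  · exact hC hv hu (hB v u w hw).1 (hB v u w hw).2

theorem betweenInterval_subset_pair_of_arc {u v : V}
    (hB : ∀ u v w, B u v w → Reach A u w ∧ Reach A w v)
    (harc : ∀ u v w, B u v w → A u v → w = u ∨ w = v)
    (huv : A u v) (hvu : ¬ Reach A v u) : betweenInterval B u v ⊆ {u, v} := by
  rintro w (hw | hw | hw)
  · exact hw
  · exact harc u v w hw huv
  · exact absurd ((hB v u w hw).1.trans (hB v u w hw).2) hvu

theorem betweenInterval_subset_pair {u v : V}
    (hB : ∀ u v w, B u v w → Reach A u w ∧ Reach A w v)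
    (harc : ∀ u v w, B u v w → A u v → w = u ∨ w = v)
    (hadj : A u v ∨ A v u) (huv : ¬ (Reach A u v ∧ Reach A v u)) :
    betweenInterval B u v ⊆ {u, v} := by
  obtain h | h := hadj
  · exact betweenInterval_subset_pair_of_arc hB harc h fun hvu => huv ⟨.of_arc h, hvu⟩
  · rw [betweenInterval_comm, Set.pair_comm]
    exact betweenInterval_subset_pair_of_arc hB harc h fun hvu => huv ⟨hvu, .of_arc h⟩

end Betweenness

section Restriction

variable {V : Type*} {A : V → V → Prop} {C : Set V}

/-- The interval function induced by `I` on the subset `C`. -/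
def restrictInterval (I : V → V → Set V) (C : Set V) (u v : C) : Set C :=
  Subtype.val ⁻¹' I u v

theorem IsConvexSet.preimage_val {I : V → V → Set V} {K : Set V} (hK : IsConvexSet I K)
    (C : Set V) : IsConvexSet (restrictInterval I C) (Subtype.val ⁻¹' K) :=
  fun u hu v hv _ hx => hK u hu v hv hx

theorem restrictInterval_betweenInterval (B : V → V → V → Prop) (C : Set V) :
    restrictInterval (betweenInterval B) C = betweenInterval fun u v w : C => B u v w := by
  ext u v w
  simp [restrictInterval, betweenInterval, Subtype.ext_iff]

theorem IsPathClosed.restrictInterval_geoInterval (hC : IsPathClosed A C) :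
    restrictInterval (geoInterval A) C = geoInterval fun a b : C => A a b := by
  simp only [geoInterval_eq_betweenInterval, restrictInterval_betweenInterval,
    hC.onGeodesic_coe_iff]

theorem restrictInterval_p3sInterval (A : V → V → Prop) (C : Set V) :
    restrictInterval (p3sInterval A) C = p3sInterval fun a b : C => A a b :=
  restrictInterval_betweenInterval (OnP3Star A) C

end Restriction

section Hull

variable {V : Type*}

theorem subset_convexHullD (I : V → V → Set V) (S : Set V) : S ⊆ convexHullD I S :=
  Set.subset_sInter fun _ hC => hC.2

theorem isConvexSet_convexHullD (I : V → V → Set V) (S : Set V) :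
    IsConvexSet I (convexHullD I S) :=
  fun u hu v hv _ hx C hC => hC.1 u (hu C hC) v (hv C hC) hx

theorem convexHullD_subset {I : V → V → Set V} {S C : Set V} (hC : IsConvexSet I C) (hS : S ⊆ C) :
    convexHullD I S ⊆ C :=
  Set.sInter_subset_of_mem ⟨hC, hS⟩

end Hull

section Partition

variable {V ι : Type*} {D : ι → Set V} {S : Set V}

theorem iUnion_eq_univ_of_existsUnique_mem (hD : ∀ v, ∃! i, v ∈ D i) : ⋃ i, D i = Set.univ :=
  Set.iUnion_eq_univ_iff.2 fun v => (hD v).exists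

theorem pairwise_disjoint_of_existsUnique_mem (hD : ∀ v, ∃! i, v ∈ D i) :
    Pairwise (Function.onFun Disjoint D) :=
  fun _ _ hij => Set.disjoint_left.2 fun v hi hj => hij ((hD v).unique hi hj)

theorem eq_univ_iff_forall_preimage_val (hcover : ⋃ i, D i = Set.univ) :
    S = Set.univ ↔ ∀ i, (Subtype.val ⁻¹' S : Set (D i)) = Set.univ := by
  simp only [Set.preimage_eq_univ_iff, Subtype.range_coe, ← Set.iUnion_subset_iff, hcover,
    Set.univ_subset_iff]

theorem preimage_val_iUnion_image_val (hdisj : Pairwise (Function.onFun Disjoint D))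
    (C : ∀ i, Set (D i)) (i : ι) : Subtype.val ⁻¹' (⋃ j, Subtype.val '' C j) = C i := by
  ext x
  simp only [Set.mem_preimage, Set.mem_iUnion]
  constructor
  · rintro ⟨j, y, hy, hyx⟩
    obtain rfl : j = i := hdisj.eq (Set.not_disjoint_iff.2 ⟨x, hyx ▸ y.2, x.2⟩)
    rwa [← Subtype.ext hyx]
  · exact fun hx => ⟨i, x, hx, rfl⟩

theorem ncard_eq_sum_ncard_preimage_val [Fintype ι] (hdisj : Pairwise (Function.onFun Disjoint D))
    (hfin : S.Finite) (hS : S ⊆ ⋃ i, D i) :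
    S.ncard = ∑ i, (Subtype.val ⁻¹' S : Set (D i)).ncard := by
  have hdisj' : Pairwise (Function.onFun Disjoint fun i => S ∩ D i) := fun i j hij =>
    (hdisj hij).mono Set.inter_subset_right Set.inter_subset_right
  have hncard (i : ι) : (S ∩ D i).ncard = (Subtype.val ⁻¹' S : Set (D i)).ncard := by
    rw [← Set.ncard_image_of_injective _ Subtype.val_injective, Subtype.image_preimage_coe,
      Set.inter_comm]
  calc S.ncard = (⋃ i, S ∩ D i).ncard := by rw [← Set.inter_iUnion, Set.inter_eq_left.2 hS]
    _ = ∑ i, (S ∩ D i).ncard := by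
        rw [Set.ncard_iUnion_of_finite (fun i => hfin.inter_of_left (D i)) hdisj',
          finsum_eq_sum_of_fintype]
    _ = ∑ i, (Subtype.val ⁻¹' S : Set (D i)).ncard := by simp only [hncard]

end Partition

section MinNcard

variable {V ι : Type*} {D : ι → Set V}

/-- The minimum cardinality of a set satisfying `P`. It is `0` if there is no such set, and also if
an infinite set satisfies `P`, since `Set.ncard` is then `0`. -/
noncomputable def minNcard (P : Set V → Prop) : ℕ :=
  sInf {k | ∃ S : Set V, P S ∧ S.ncard = k}

theorem minNcard_le {P : Set V → Prop} {S : Set V} (hS : P S) : minNcard P ≤ S.ncard :=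
  Nat.sInf_le ⟨S, hS, rfl⟩

theorem exists_ncard_eq_minNcard {P : Set V → Prop} (hP : ∃ S, P S) :
    ∃ S, P S ∧ S.ncard = minNcard P :=
  Nat.sInf_mem (s := {k | ∃ S : Set V, P S ∧ S.ncard = k}) (hP.elim fun S hS => ⟨_, S, hS, rfl⟩)

theorem minNcard_eq_sum [Finite V] [Fintype ι] (hD : ∀ v, ∃! i, v ∈ D i) {P : Set V → Prop}
    {Q : ∀ i, Set (D i) → Prop} (hPQ : ∀ S, P S ↔ ∀ i, Q i (Subtype.val ⁻¹' S))
    (hP : ∃ S, P S) : minNcard P = ∑ i, minNcard (Q i) := by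
  have hdisj := pairwise_disjoint_of_existsUnique_mem hD
  have hncard (S : Set V) : S.ncard = ∑ i, (Subtype.val ⁻¹' S : Set (D i)).ncard :=
    ncard_eq_sum_ncard_preimage_val hdisj S.toFinite
      (iUnion_eq_univ_of_existsUnique_mem hD ▸ S.subset_univ)
  apply le_antisymm
  · have hQ (i : ι) : ∃ S, Q i S := hP.elim fun S hS => ⟨_, (hPQ S).1 hS i⟩
    choose C hC hCmin using fun i => exists_ncard_eq_minNcard (hQ i)
    have hpre (i : ι) : Subtype.val ⁻¹' (⋃ j, Subtype.val '' C j) = C i :=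
      preimage_val_iUnion_image_val hdisj C i
    calc minNcard P ≤ (⋃ j, Subtype.val '' C j).ncard :=
          minNcard_le ((hPQ _).2 fun i => (hpre i).symm ▸ hC i)
      _ = ∑ i, minNcard (Q i) := by
          simp only [hncard, hpre, hCmin]
  · obtain ⟨S, hS, hSmin⟩ := exists_ncard_eq_minNcard hP
    rw [← hSmin, hncard]
    exact Finset.sum_le_sum fun i _ => minNcard_le ((hPQ S).1 hS i)

end MinNcard

section Decomposition

variable {V ι : Type*} {I : V → V → Set V} {D : ι → Set V}

/-- The interval function `I` is the disjoint sum of its restrictions to the parts `D i`: the parts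
are convex and partition the vertex set, and the interval of two vertices in distinct parts contains
no further vertex. -/
structure IsIntervalDecomposition (I : V → V → Set V) (D : ι → Set V) : Prop where
  existsUnique_mem : ∀ v, ∃! i, v ∈ D i
  mem_self : ∀ u, u ∈ I u u
  isConvexSet : ∀ i, IsConvexSet I (D i)
  subset_pair : ∀ ⦃i j⦄, i ≠ j → ∀ u ∈ D i, ∀ v ∈ D j, I u v ⊆ {u, v}

namespace IsIntervalDecomposition

theorem of_strongComponents {A : V → V → Prop} {B : V → V → V → Prop}
    (hadj : ∀ u v, ¬ (Reach A u v ∧ Reach A v u) → A u v ∨ A v u)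
    (hD : ∀ i, IsStrongComponent A (D i))
    (hall : ∀ C : Set V, IsStrongComponent A C → ∃ i, D i = C)
    (hinj : Function.Injective D)
    (hB : ∀ u v w, B u v w → Reach A u w ∧ Reach A w v)
    (harc : ∀ u v w, B u v w → A u v → w = u ∨ w = v) :
    IsIntervalDecomposition (betweenInterval B) D := by
  have hpart := existsUnique_mem_of_strongComponents hD hall hinj
  refine ⟨hpart, mem_betweenInterval_self,
    fun i => (hD i).isPathClosed.isConvexSet_betweenInterval hB, fun i j hij u hu v hv => ?_⟩
  have huv : ¬ (Reach A u v ∧ Reach A v u) := fun h =>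
    hij ((hpart v).unique ((hD i).isPathClosed hu hu h.1 h.2) hv)
  exact betweenInterval_subset_pair hB harc (hadj u v huv) huv

theorem iUnion_eq_univ (h : IsIntervalDecomposition I D) : ⋃ i, D i = Set.univ :=
  iUnion_eq_univ_of_existsUnique_mem h.existsUnique_mem

theorem mem_and_mem_or_eq_or_eq (h : IsIntervalDecomposition I D) {i : ι} {u v x : V}
    (hx : x ∈ I u v) (hxi : x ∈ D i) : (u ∈ D i ∧ v ∈ D i) ∨ x = u ∨ x = v := by
  obtain ⟨a, ha, -⟩ := h.existsUnique_mem u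
  obtain ⟨b, hb, -⟩ := h.existsUnique_mem v
  obtain rfl | hab := eq_or_ne a b
  · obtain rfl : a = i := (h.existsUnique_mem x).unique (h.isConvexSet a u ha v hb hx) hxi
    exact .inl ⟨ha, hb⟩
  · exact .inr (h.subset_pair hab u ha v hb hx)

theorem preimage_iUnion_interval (h : IsIntervalDecomposition I D) (S : Set V) (i : ι) :
    (Subtype.val ⁻¹' ⋃ u ∈ S, ⋃ v ∈ S, I u v : Set (D i)) =
      ⋃ u ∈ Subtype.val ⁻¹' S, ⋃ v ∈ Subtype.val ⁻¹' S, restrictInterval I (D i) u v := by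
  ext x
  simp only [Set.mem_preimage, Set.mem_iUnion, exists_prop]
  constructor
  · rintro ⟨u, hu, v, hv, hx⟩
    have mem_of_self (hxS : ↑x ∈ S) : ∃ u : D i, ↑u ∈ S ∧ ∃ v : D i, ↑v ∈ S ∧
        x ∈ restrictInterval I (D i) u v := ⟨x, hxS, x, hxS, h.mem_self x⟩
    obtain ⟨hui, hvi⟩ | hxu | hxv := h.mem_and_mem_or_eq_or_eq hx x.2
    · exact ⟨⟨u, hui⟩, hu, ⟨v, hvi⟩, hv, hx⟩
    · exact mem_of_self (hxu ▸ hu)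
    · exact mem_of_self (hxv ▸ hv)
  · rintro ⟨u, hu, v, hv, hx⟩
    exact ⟨u, hu, v, hv, hx⟩

theorem isIntervalSet_iff (h : IsIntervalDecomposition I D) (S : Set V) :
    IsIntervalSet I S ↔
      ∀ i, IsIntervalSet (restrictInterval I (D i)) (Subtype.val ⁻¹' S) := by
  simp only [IsIntervalSet, eq_univ_iff_forall_preimage_val h.iUnion_eq_univ,
    h.preimage_iUnion_interval]

theorem isConvexSet_setOf_mem_imp (h : IsIntervalDecomposition I D) {i : ι} {K : Set (D i)}
    (hK : IsConvexSet (restrictInterval I (D i)) K) :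
    IsConvexSet I {x | ∀ hx : x ∈ D i, ⟨x, hx⟩ ∈ K} := by
  intro u hu v hv x hx hxi
  obtain ⟨hui, hvi⟩ | rfl | rfl := h.mem_and_mem_or_eq_or_eq hx hxi
  · exact hK ⟨u, hui⟩ (hu hui) ⟨v, hvi⟩ (hv hvi) hx
  · exact hu hxi
  · exact hv hxi

theorem preimage_convexHullD (h : IsIntervalDecomposition I D) (S : Set V) (i : ι) :
    (Subtype.val ⁻¹' convexHullD I S : Set (D i)) =
      convexHullD (restrictInterval I (D i)) (Subtype.val ⁻¹' S) := by
  apply Set.Subset.antisymm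
  · intro x hx
    exact convexHullD_subset (h.isConvexSet_setOf_mem_imp (isConvexSet_convexHullD _ _))
      (fun s hs hsi => subset_convexHullD _ _ hs) hx x.2
  · exact convexHullD_subset ((isConvexSet_convexHullD I S).preimage_val _)
      (Set.preimage_mono (subset_convexHullD I S))

theorem isHullSet_iff (h : IsIntervalDecomposition I D) (S : Set V) :
    IsHullSet I S ↔ ∀ i, IsHullSet (restrictInterval I (D i)) (Subtype.val ⁻¹' S) := by
  simp only [IsHullSet, eq_univ_iff_forall_preimage_val h.iUnion_eq_univ,
    h.preimage_convexHullD]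

theorem intervalNumber_eq_sum (h : IsIntervalDecomposition I D) [Finite V] [Fintype ι] :
    intervalNumber I = ∑ i, intervalNumber (restrictInterval I (D i)) :=
  minNcard_eq_sum h.existsUnique_mem h.isIntervalSet_iff
    ⟨Set.univ, Set.eq_univ_of_forall fun x => by
      simpa using ⟨x, x, h.mem_self x⟩⟩

theorem hullNumber_eq_sum (h : IsIntervalDecomposition I D) [Finite V] [Fintype ι] :
    hullNumber I = ∑ i, hullNumber (restrictInterval I (D i)) :=
  minNcard_eq_sum h.existsUnique_mem h.isHullSet_iff
    ⟨Set.univ, Set.univ_subset_iff.1 (subset_convexHullD I Set.univ)⟩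

end IsIntervalDecomposition

end Decomposition

theorem stmt_9_general {V ι : Type*} [Finite V] [Fintype ι] (A : V → V → Prop)
    (hadj : ∀ u v, ¬ (Reach A u v ∧ Reach A v u) → A u v ∨ A v u)
    (D : ι → Set V) (hD : ∀ i, IsStrongComponent A (D i))
    (hall : ∀ C : Set V, IsStrongComponent A C → ∃ i, D i = C)
    (hinj : Function.Injective D) :
    intervalNumber (geoInterval A) =
        ∑ i, intervalNumber (geoInterval (fun a b : D i => A a.1 b.1)) ∧
    hullNumber (geoInterval A) =
        ∑ i, hullNumber (geoInterval (fun a b : D i => A a.1 b.1)) ∧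
    intervalNumber (p3sInterval A) =
        ∑ i, intervalNumber (p3sInterval (fun a b : D i => A a.1 b.1)) ∧
    hullNumber (p3sInterval A) =
        ∑ i, hullNumber (p3sInterval (fun a b : D i => A a.1 b.1)) := by
  have hgeo : IsIntervalDecomposition (geoInterval A) D :=
    .of_strongComponents hadj hD hall hinj (B := OnGeodesic A) (fun _ _ _ h => h.reach)
      fun _ _ _ h => h.eq_or_eq_of_arc
  have hp3s : IsIntervalDecomposition (p3sInterval A) D :=
    .of_strongComponents hadj hD hall hinj (B := OnP3Star A) (fun _ _ _ h => h.reach)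
      fun _ _ _ h huv => absurd huv h.2.2
  simp only [← (hD _).isPathClosed.restrictInterval_geoInterval, ← restrictInterval_p3sInterval]
  exact ⟨hgeo.intervalNumber_eq_sum, hgeo.hullNumber_eq_sum,
    hp3s.intervalNumber_eq_sum, hp3s.hullNumber_eq_sum⟩

/-- For a tournament with strong components `D_1, …, D_k`, the
interval and hull numbers in the geodetic and P3* convexities are the sums of
the corresponding numbers of the (induced) strong components. -/
theorem stmt_9 {V : Type*} [Finite V] (A : V → V → Prop) (hT : IsTournament A)
    (k : ℕ) (D : Fin k → Set V)
    (hD : ∀ i, IsStrongComponent A (D i))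
    (hall : ∀ C : Set V, IsStrongComponent A C → ∃ i, D i = C)
    (hinj : Function.Injective D) :
    intervalNumber (geoInterval A) =
        ∑ i, intervalNumber (geoInterval (fun a b : D i => A a.1 b.1)) ∧
    hullNumber (geoInterval A) =
        ∑ i, hullNumber (geoInterval (fun a b : D i => A a.1 b.1)) ∧
    intervalNumber (p3sInterval A) =
        ∑ i, intervalNumber (p3sInterval (fun a b : D i => A a.1 b.1)) ∧
    hullNumber (p3sInterval A) =
        ∑ i, hullNumber (p3sInterval (fun a b : D i => A a.1 b.1)) := by
  exact stmt_9_general A (fun u v huv => hT.2 u v fun heq => huv (heq ▸ ⟨.refl u, .refl u⟩))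
    D hD hall hinj
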